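/- Let N be an odd Niemeier lattice of minimum norm 2 whose two even neighbors have root sublattices isometric to D₁₂⊕D₁₂ and A₁₂⊕A₁₂ respectively. Then N does not contain a sublattice isometric to L⁺. -/

import Mathlib

open scoped BigOperators

namespace Niemeier

variable {V : Type*} [AddCommGroup V] [Module ℚ V]
variable {W : Type*} [AddCommGroup W] [Module ℚ W]

/-- The dual lattice of a `ℤ`-submodule `L` of a rational vector space `V` with respect to the
bilinear form `B`: all vectors pairing integrally with every element of `L`. -/
def dualLattice (B : V →ₗ[ℚ] V →ₗ[ℚ] ℚ) (L : Submodule ℤ V) : Submodule ℤ V where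
  carrier := {x | ∀ y ∈ L, ∃ n : ℤ, B x y = n}
  zero_mem' := by
    intro y hy
    exact ⟨0, by simp⟩
  add_mem' := by
    intro a b ha hb y hy
    obtain ⟨m, hm⟩ := ha y hy
    obtain ⟨k, hk⟩ := hb y hy
    exact ⟨m + k, by push_cast [map_add, LinearMap.add_apply, hm, hk]; rfl⟩
  smul_mem' := by
    intro c x hx y hy
    obtain ⟨m, hm⟩ := hx y hy
    refine ⟨c * m, ?_⟩
    have h1 : B (c • x) y = c • (B x y) := by
      rw [map_zsmul]; rfl
    rw [h1, hm, zsmul_eq_mul]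
    push_cast
    ring

/-- `B` is a symmetric positive-definite bilinear form. -/
def IsPosDefSymm (B : V →ₗ[ℚ] V →ₗ[ℚ] ℚ) : Prop :=
  (∀ x y, B x y = B y x) ∧ ∀ x : V, x ≠ 0 → 0 < B x x

/-- `L` is a (full-rank, integral) lattice in `V` with respect to `B`. -/
structure IsIntegralLattice (B : V →ₗ[ℚ] V →ₗ[ℚ] ℚ) (L : Submodule ℤ V) : Prop where
  fg : L.FG
  spans : Submodule.span ℚ (L : Set V) = ⊤
  integral : L ≤ dualLattice B L

/-- `L` is unimodular: it coincides with its dual lattice. -/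
def IsUnimodular (B : V →ₗ[ℚ] V →ₗ[ℚ] ℚ) (L : Submodule ℤ V) : Prop :=
  L = dualLattice B L

/-- `L` is an even lattice: all norms are even integers. -/
def IsEvenLat (B : V →ₗ[ℚ] V →ₗ[ℚ] ℚ) (L : Submodule ℤ V) : Prop :=
  ∀ v ∈ L, ∃ n : ℤ, B v v = 2 * n

/-- `L` is an odd lattice: some vector has odd (integer) norm. -/
def IsOddLat (B : V →ₗ[ℚ] V →ₗ[ℚ] ℚ) (L : Submodule ℤ V) : Prop :=
  ∃ v ∈ L, ∃ n : ℤ, B v v = 2 * n + 1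

/-- An odd Niemeier lattice: an odd positive-definite unimodular integral lattice of rank 24
(positive-definiteness of `B` is a separate hypothesis). -/
def IsOddNiemeier (B : V →ₗ[ℚ] V →ₗ[ℚ] ℚ) (N : Submodule ℤ V) : Prop :=
  IsIntegralLattice B N ∧ IsUnimodular B N ∧ IsOddLat B N ∧ Module.finrank ℚ V = 24

/-- `D` is a subgroup of index two in `L`. -/
def IndexTwo (D L : Submodule ℤ V) : Prop :=
  D ≤ L ∧ ∃ a ∈ L, a ∉ D ∧ ∀ x ∈ L, x ∈ D ∨ x - a ∈ D

/-- Two lattices are neighbors if their intersection has index two in each of them. -/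
def Neighbors (L M : Submodule ℤ V) : Prop :=
  IndexTwo (L ⊓ M) L ∧ IndexTwo (L ⊓ M) M

/-- `E` is an even neighbor of the odd Niemeier lattice `N`: an even unimodular integral
lattice (in the same ambient space) which is a neighbor of `N`. -/
def IsEvenNeighbor (B : V →ₗ[ℚ] V →ₗ[ℚ] ℚ) (N E : Submodule ℤ V) : Prop :=
  IsIntegralLattice B E ∧ IsUnimodular B E ∧ IsEvenLat B E ∧ Neighbors N E

/-- The minimum norm of `L` equals `m`. -/
def HasMinNorm (B : V →ₗ[ℚ] V →ₗ[ℚ] ℚ) (L : Submodule ℤ V) (m : ℚ) : Prop :=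
  (∃ v ∈ L, v ≠ 0 ∧ B v v = m) ∧ ∀ v ∈ L, v ≠ 0 → m ≤ B v v

/-- `N` contains a sublattice isometric to the rank-6 lattice `L⁺`, i.e. there are vectors
`h, a 0, …, a 4` in `N` realizing the Gram matrix of `L⁺`. -/
def ContainsLPlus (B : V →ₗ[ℚ] V →ₗ[ℚ] ℚ) (N : Submodule ℤ V) : Prop :=
  ∃ h ∈ N, ∃ a : Fin 5 → V, (∀ i, a i ∈ N) ∧
    B h h = 2 ∧ (∀ i, B h (a i) = 1) ∧ (∀ i, B (a i) (a i) = 3) ∧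
    ∀ i j, i ≠ j → B (a i) (a j) = 0

/-- Two lattices (in possibly different ambient spaces, with forms `B` and `C`) are isometric:
there is a `ℤ`-linear bijection between them preserving the bilinear forms. -/
def LatticeIsometric (B : V → V → ℚ) (C : W → W → ℚ)
    (L : Submodule ℤ V) (M : Submodule ℤ W) : Prop :=
  ∃ f : L ≃ₗ[ℤ] M, ∀ x y : L, C (f x) (f y) = B x y

/-- The standard dot product on `ℚⁿ`. -/
def stdDot (n : ℕ) : (Fin n → ℚ) → (Fin n → ℚ) → ℚ := fun x y => ∑ i, x i * y i

/-- The orthogonal sum of two bilinear forms. -/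
def prodForm (B : V → V → ℚ) (C : W → W → ℚ) : V × W → V × W → ℚ :=
  fun p q => B p.1 q.1 + C p.2 q.2

/-- A vector in `ℚⁿ` has integer coordinates. -/
def IsIntVec {n : ℕ} (x : Fin n → ℚ) : Prop := ∀ i, ∃ m : ℤ, x i = m

/-- The root lattice `Dₙ = {x ∈ ℤⁿ : ∑ xᵢ even}`. -/
def latD (n : ℕ) : Submodule ℤ (Fin n → ℚ) where
  carrier := {x | IsIntVec x ∧ ∃ k : ℤ, ∑ i, x i = 2 * k}
  zero_mem' := by
    refine ⟨fun i => ⟨0, by simp⟩, 0, by simp⟩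
  add_mem' := by
    rintro a b ⟨ha, k₁, hk₁⟩ ⟨hb, k₂, hk₂⟩
    refine ⟨fun i => ?_, k₁ + k₂, ?_⟩
    · obtain ⟨m, hm⟩ := ha i
      obtain ⟨m', hm'⟩ := hb i
      exact ⟨m + m', by simp [Pi.add_apply, hm, hm']⟩
    · simp only [Pi.add_apply, Finset.sum_add_distrib, hk₁, hk₂]
      push_cast
      ring
  smul_mem' := by
    rintro c x ⟨hx, k, hk⟩
    refine ⟨fun i => ?_, c * k, ?_⟩
    · obtain ⟨m, hm⟩ := hx i
      exact ⟨c * m, by simp [Pi.smul_apply, hm, zsmul_eq_mul]⟩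
    · have : ∑ i, (c • x) i = c • ∑ i, x i := by
        simp [Pi.smul_apply, Finset.smul_sum]
      rw [this, hk, zsmul_eq_mul]
      push_cast
      ring

/-- The root lattice `Aₙ = {x ∈ ℤⁿ⁺¹ : ∑ xᵢ = 0}`. -/
def latA (n : ℕ) : Submodule ℤ (Fin (n + 1) → ℚ) where
  carrier := {x | IsIntVec x ∧ ∑ i, x i = 0}
  zero_mem' := ⟨fun i => ⟨0, by simp⟩, by simp⟩
  add_mem' := by
    rintro a b ⟨ha, hka⟩ ⟨hb, hkb⟩
    refine ⟨fun i => ?_, ?_⟩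
    · obtain ⟨m, hm⟩ := ha i
      obtain ⟨m', hm'⟩ := hb i
      exact ⟨m + m', by simp [Pi.add_apply, hm, hm']⟩
    · simp [Pi.add_apply, Finset.sum_add_distrib, hka, hkb]
  smul_mem' := by
    rintro c x ⟨hx, hk⟩
    refine ⟨fun i => ?_, ?_⟩
    · obtain ⟨m, hm⟩ := hx i
      exact ⟨c * m, by simp [Pi.smul_apply, hm, zsmul_eq_mul]⟩
    · have : ∑ i, (c • x) i = c • ∑ i, x i := by
        simp [Pi.smul_apply, Finset.smul_sum]
      rw [this, hk, smul_zero]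

/-- The root lattice `E₈ = D₈ + ℤ·(½,…,½)`. -/
def latE8 : Submodule ℤ (Fin 8 → ℚ) :=
  latD 8 ⊔ Submodule.span ℤ {fun _ => (1 : ℚ) / 2}

/-- The root sublattice of `E`: the `ℤ`-span of its vectors of norm 2. -/
def rootSublattice (B : V →ₗ[ℚ] V →ₗ[ℚ] ℚ) (E : Submodule ℤ V) : Submodule ℤ V :=
  Submodule.span ℤ {v : V | v ∈ E ∧ B v v = 2}

/-- The set of even-norm vectors of `N` (the even sublattice, as a set). -/
def evenSet (B : V →ₗ[ℚ] V →ₗ[ℚ] ℚ) (N : Submodule ℤ V) : Set V :=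
  {x | x ∈ N ∧ ∃ n : ℤ, B x x = 2 * n}

/-- The unordered pair of root sublattices of `E₁` and `E₂` is isometric to the pair
`(M₁, M₂)`. -/
def RootPairIso {W₁ W₂ : Type*} [AddCommGroup W₁] [Module ℚ W₁]
    [AddCommGroup W₂] [Module ℚ W₂]
    (B : V →ₗ[ℚ] V →ₗ[ℚ] ℚ) (E₁ E₂ : Submodule ℤ V)
    (C₁ : W₁ → W₁ → ℚ) (M₁ : Submodule ℤ W₁)
    (C₂ : W₂ → W₂ → ℚ) (M₂ : Submodule ℤ W₂) : Prop :=
  (LatticeIsometric (fun x y => B x y) C₁ (rootSublattice B E₁) M₁ ∧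
    LatticeIsometric (fun x y => B x y) C₂ (rootSublattice B E₂) M₂) ∨
  (LatticeIsometric (fun x y => B x y) C₂ (rootSublattice B E₁) M₂ ∧
    LatticeIsometric (fun x y => B x y) C₁ (rootSublattice B E₂) M₁)

/-- The unordered pair of root sublattices of `E₁`, `E₂` is one of the four exceptional pairs
`{E₈³, D₈³}`, `{D₁₆⊕E₈, A₁₅⊕D₉}`, `{D₁₂², A₁₂²}`, `{D₂₄, A₂₄}`. -/
def IsExceptionalPair (B : V →ₗ[ℚ] V →ₗ[ℚ] ℚ) (E₁ E₂ : Submodule ℤ V) : Prop :=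
  RootPairIso B E₁ E₂
    (prodForm (stdDot 8) (prodForm (stdDot 8) (stdDot 8))) (latE8.prod (latE8.prod latE8))
    (prodForm (stdDot 8) (prodForm (stdDot 8) (stdDot 8))) ((latD 8).prod ((latD 8).prod (latD 8))) ∨
  RootPairIso B E₁ E₂
    (prodForm (stdDot 16) (stdDot 8)) ((latD 16).prod latE8)
    (prodForm (stdDot 16) (stdDot 9)) ((latA 15).prod (latD 9)) ∨
  RootPairIso B E₁ E₂
    (prodForm (stdDot 12) (stdDot 12)) ((latD 12).prod (latD 12))
    (prodForm (stdDot 13) (stdDot 13)) ((latA 12).prod (latA 12)) ∨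
  RootPairIso B E₁ E₂
    (stdDot 24) (latD 24)
    (stdDot 25) (latA 24)

/-!
Write `Dₙ ⊕ Dₘ ⊆ E₁` in an orthonormal frame `e`. If some `2 eᵢ` lay in `N`, then, `N ⊓ E₁` having
index two in `E₁`, at least four of the vectors of its block would span a `D₄` inside `N`. Vectors
of even norm in `N` lie in `E₂` too, but `A_k ⊕ A_l` contains no `D₄`. Hence `2 eᵢ ∈ E₁ \ N` for
all `i`.

By unimodularity of `E₁`, a vector of `N \ E₁` has all its coordinates in `¼ + ½ℤ`. Moreover one
of `eᵢ ± eⱼ` lies in `N` for `i`, `j` in a common block, so modulo `ℤ` one coordinate per block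
determines all the others. The five vectors of norm 3 in `L⁺` thus fall into at most four classes;
let `a`, `b` be two in the same class. Then `a + b` has all its coordinates in `½ + ℤ`, and so has
`a + b - h`, because the root `h` has integer coordinates. Its norm is therefore at least
`(n + m) / 4 > 4`, whereas the Gram matrix of `L⁺` gives `3 + 3 + 2 - 2 - 2 = 4`.
-/

section IndexTwo

variable {G : Type*} [AddCommGroup G] {D L : Submodule ℤ G}

lemma IndexTwo.sub_mem_of_notMem (h : IndexTwo D L) {x y : G} (hx : x ∈ L) (hy : y ∈ L)
    (hxD : x ∉ D) (hyD : y ∉ D) : x - y ∈ D := by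
  obtain ⟨-, a, -, -, hcoset⟩ := h
  have hxa : x - a ∈ D := (hcoset x hx).resolve_left hxD
  have hya : y - a ∈ D := (hcoset y hy).resolve_left hyD
  simpa only [sub_sub_sub_cancel_right] using D.sub_mem hxa hya

lemma IndexTwo.add_mem_of_notMem (h : IndexTwo D L) {x y : G} (hx : x ∈ L) (hy : y ∈ L)
    (hxD : x ∉ D) (hyD : y ∉ D) : x + y ∈ D := by
  simpa only [sub_neg_eq_add] using
    h.sub_mem_of_notMem hx (L.neg_mem hy) hxD (mt D.neg_mem_iff.1 hyD)

lemma IndexTwo.add_self_mem (h : IndexTwo D L) {x : G} (hx : x ∈ L) : x + x ∈ D := by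
  by_cases hxD : x ∈ D
  · exact D.add_mem hxD hxD
  · exact h.add_mem_of_notMem hx hx hxD hxD

lemma IndexTwo.exists_embedding_sub_mem {ι : Type*} [Fintype ι] (h : IndexTwo D L) (x : ι → G)
    (hx : ∀ i j, x i - x j ∈ L) {k : ℕ} (hk : 2 * k < Fintype.card ι) :
    ∃ g : Fin (k + 1) ↪ ι, ∀ a b, x (g a) - x (g b) ∈ D := by
  classical
  have : Nonempty ι := Fintype.card_pos_iff.1 (by omega)
  let base : ι := Classical.arbitrary ι
  obtain ⟨c, hc⟩ := Fintype.exists_lt_card_fiber_of_mul_lt_card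
    (fun i => decide (x base - x i ∈ D)) (by simpa using hk)
  obtain ⟨g⟩ : Nonempty (Fin (k + 1) ↪ {i // decide (x base - x i ∈ D) = c}) :=
    Function.Embedding.nonempty_of_card_le (by simpa [Fintype.card_subtype] using hc)
  refine ⟨g.trans (Function.Embedding.subtype _), fun a b => ?_⟩
  have hab : x base - x (g a) ∈ D ↔ x base - x (g b) ∈ D :=
    decide_eq_decide.1 ((g a).2.trans (g b).2.symm)
  rw [Function.Embedding.trans_apply, Function.Embedding.trans_apply,
    Function.Embedding.subtype_apply, Function.Embedding.subtype_apply,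
    ← sub_sub_sub_cancel_left _ _ (x base)]
  by_cases ha : x base - x (g a) ∈ D
  · exact D.sub_mem (hab.1 ha) ha
  · exact h.sub_mem_of_notMem (hx _ _) (hx _ _) (mt hab.2 ha) ha

end IndexTwo

section EvenNeighbor

variable {B : V →ₗ[ℚ] V →ₗ[ℚ] ℚ} {N E : Submodule ℤ V}

lemma IsEvenLat.notMem_of_odd (hE : IsEvenLat B E) {v : V} {k : ℤ} (hv : B v v = 2 * k + 1) :
    v ∉ E := by
  intro hvE
  obtain ⟨n, hn⟩ := hE v hvE
  have : 2 * k + 1 = 2 * n := by exact_mod_cast hv.symm.trans hn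
  omega

lemma mem_of_even_norm (hsymm : ∀ x y, B x y = B y x) (hN : N ≤ dualLattice B N)
    (hodd : IsOddLat B N) (hE : IsEvenLat B E) (hNE : IndexTwo (N ⊓ E) N) {x : V} (hx : x ∈ N)
    {n : ℤ} (hxx : B x x = 2 * n) : x ∈ E := by
  obtain ⟨v, hv, k, hvv⟩ := hodd
  by_contra hxE
  have hvE : v ∉ E := hE.notMem_of_odd hvv
  have hsum : x + v ∈ E :=
    (hNE.add_mem_of_notMem hx hv (fun h => hxE h.2) (fun h => hvE h.2)).2
  obtain ⟨c, hc⟩ := hN hx v hv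
  refine hE.notMem_of_odd (k := n + c + k) ?_ hsum
  simp only [map_add, LinearMap.add_apply, hsymm v x, hxx, hvv, hc]
  push_cast
  ring

lemma exists_two_mul_eq_odd (hN : N ≤ dualLattice B N) (hE : IsUnimodular B E)
    (hNE : IndexTwo (N ⊓ E) E) {u v : V} (hu : u ∈ E) (huN : u ∉ N) (hv : v ∈ N) (hvE : v ∉ E) :
    ∃ k : ℤ, 2 * B v u = 2 * k + 1 := by
  obtain ⟨m, hm⟩ := hN hv _ (hNE.add_self_mem hu).1
  rw [map_add, ← two_mul] at hm
  obtain ⟨k, rfl | rfl⟩ := m.even_or_odd'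
  · -- `B v u` is an integer, so `v` pairs integrally with `E = (N ⊓ E) ∪ (u + N ⊓ E)`.
    refine absurd ?_ hvE
    rw [hE]
    intro y hy
    by_cases hyN : y ∈ N
    · exact hN hv y hyN
    obtain ⟨l, hl⟩ := hN hv _
      (hNE.sub_mem_of_notMem hy hu (fun h => hyN h.1) (fun h => huN h.1)).1
    refine ⟨l + k, ?_⟩
    rw [map_sub] at hl
    push_cast at hm ⊢
    linarith
  · exact ⟨k, by exact_mod_cast hm⟩

end EvenNeighbor

lemma LatticeIsometric.exists_coords {G : Type*} [AddCommGroup G] {C : G → G → ℚ}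
    {L : Submodule ℤ G} {n m : ℕ} {P : Submodule ℤ (Fin n → ℚ)} {Q : Submodule ℤ (Fin m → ℚ)}
    (h : LatticeIsometric C (prodForm (stdDot n) (stdDot m)) L (P.prod Q)) :
    ∃ φ : L →ₗ[ℤ] (Fin n ⊕ Fin m → ℚ), Function.Injective φ ∧
      (∀ x y : L, C x y = φ x ⬝ᵥ φ y) ∧
      ∀ w, w ∈ LinearMap.range φ ↔ w ∘ Sum.inl ∈ P ∧ w ∘ Sum.inr ∈ Q := by
  obtain ⟨f, hf⟩ := h
  let κ := (LinearEquiv.sumArrowLequivProdArrow (Fin n) (Fin m) ℤ ℚ).symm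
  refine ⟨κ.toLinearMap ∘ₗ (P.prod Q).subtype ∘ₗ f.toLinearMap, ?_, fun x y => ?_, fun w => ?_⟩
  · exact κ.injective.comp (Subtype.val_injective.comp f.injective)
  · rw [← hf]
    simp only [dotProduct, Fintype.sum_sum_type]
    rfl
  · constructor
    · rintro ⟨x, rfl⟩
      exact (f x).2
    · intro hw
      refine ⟨f.symm ⟨(w ∘ Sum.inl, w ∘ Sum.inr), hw⟩, ?_⟩
      simp only [LinearMap.comp_apply, LinearEquiv.coe_coe, LinearEquiv.apply_symm_apply]
      exact κ.apply_symm_apply w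

section RootsOfTypeA

/-- `L` contains a `D₄` diagram of roots: a central root `c` and three outer roots `r i`. -/
def ContainsD4 (B : V →ₗ[ℚ] V →ₗ[ℚ] ℚ) (L : Submodule ℤ V) : Prop :=
  ∃ c ∈ L, ∃ r : Fin 3 → V, (∀ i, r i ∈ L) ∧
    B c c = 2 ∧ (∀ i, B (r i) (r i) = 2) ∧ (∀ i, B c (r i) = -1) ∧
    ∀ i j, i ≠ j → B (r i) (r j) = 0

variable {ι : Type*} [Fintype ι]

lemma exists_eq_single_sub_single [DecidableEq ι] {v : ι → ℤ} (hnorm : v ⬝ᵥ v = 2)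
    (hsum : ∑ i, v i = 0) :
    ∃ p q, p ≠ q ∧ v = Pi.single p 1 - Pi.single q 1 := by
  have hv : ∃ i ∈ Finset.univ, v i ≠ 0 := by
    by_contra! h
    simp [dotProduct, h] at hnorm
  obtain ⟨p, -, hp⟩ := Finset.exists_pos_of_sum_zero_of_exists_nonzero v hsum hv
  obtain ⟨q, -, hq⟩ : ∃ q ∈ Finset.univ, 0 < -v q :=
    Finset.exists_pos_of_sum_zero_of_exists_nonzero (fun i => -v i)
      (by rw [Finset.sum_neg_distrib, hsum, neg_zero]) (by simpa using hv)
  have hpq : p ≠ q := by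
    rintro rfl
    omega
  have hle (T : Finset ι) : ∑ i ∈ T, v i * v i ≤ 2 :=
    hnorm ▸ Finset.sum_le_univ_sum_of_nonneg fun i => mul_self_nonneg (v i)
  have hpair := hle {p, q}
  rw [Finset.sum_pair hpq] at hpair
  have hvp : v p = 1 := by nlinarith
  have hvq : v q = -1 := by nlinarith
  refine ⟨p, q, hpq, funext fun r => ?_⟩
  by_cases hrp : r = p
  · simp [hrp, hpq, hvp]
  by_cases hrq : r = q
  · simp [hrq, hpq.symm, hvq]
  have htriple := hle {r, p, q}
  rw [Finset.sum_insert (by simp [hrp, hrq]), Finset.sum_pair hpq, hvp, hvq] at htriple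
  have hvr : v r * v r = 0 := by nlinarith [mul_self_nonneg (v r)]
  simpa [hrp, hrq] using hvr

lemma eq_zero_or_eq_zero_of_orthogonal {v w : ι → ℤ} (hv : v ⬝ᵥ v = 2) (hv0 : ∑ i, v i = 0)
    (hw : w ⬝ᵥ w = 2) (hw0 : ∑ i, w i = 0) (hvw : v ⬝ᵥ w = 0) (i : ι) : v i = 0 ∨ w i = 0 := by
  classical
  obtain ⟨p, q, hpq, rfl⟩ := exists_eq_single_sub_single hv hv0
  obtain ⟨p', q', hpq', rfl⟩ := exists_eq_single_sub_single hw hw0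
  simp only [sub_dotProduct, single_dotProduct, Pi.sub_apply, Pi.single_apply] at hvw ⊢
  grind

lemma exists_dotProduct_eq_zero_of_pairwise_orthogonal {c : ι → ℤ} {r : Fin 3 → ι → ℤ}
    (hc : c ⬝ᵥ c = 2) (hc0 : ∑ p, c p = 0) (hr : ∀ i, r i ⬝ᵥ r i = 2) (hr0 : ∀ i, ∑ p, r i p = 0)
    (horth : ∀ i j, i ≠ j → r i ⬝ᵥ r j = 0) : ∃ i, c ⬝ᵥ r i = 0 := by
  classical
  obtain ⟨p, q, -, rfl⟩ := exists_eq_single_sub_single hc hc0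
  by_contra! hmeet
  have hsupp (i : Fin 3) : r i p ≠ 0 ∨ r i q ≠ 0 := by
    by_contra! h
    exact hmeet i (by simp [sub_dotProduct, h])
  obtain ⟨i, j, hij, hsame⟩ := Fintype.exists_ne_map_eq_of_card_lt
    (fun i => decide (r i p = 0)) (by simp)
  have hdisj := eq_zero_or_eq_zero_of_orthogonal (hr i) (hr0 i) (hr j) (hr0 j) (horth i j hij)
  have hdisj_p : r i p = 0 ∨ r j p = 0 := hdisj p
  have hdisj_q : r i q = 0 ∨ r j q = 0 := hdisj q
  have hsupp_i : r i p ≠ 0 ∨ r i q ≠ 0 := hsupp i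
  have hsupp_j : r j p ≠ 0 ∨ r j q ≠ 0 := hsupp j
  simp only [decide_eq_decide] at hsame
  tauto

variable {B : V →ₗ[ℚ] V →ₗ[ℚ] ℚ} {N L E : Submodule ℤ V} {k l : ℕ}

lemma ContainsD4.of_roots_mem (h : ContainsD4 B N) (hroots : ∀ x ∈ N, B x x = 2 → x ∈ L) :
    ContainsD4 B L := by
  obtain ⟨c, hc, r, hr, hcc, hrr, hgram⟩ := h
  exact ⟨c, hroots c hc hcc, r, fun i => hroots _ (hr i) (hrr i), hcc, hrr, hgram⟩

lemma LatticeIsometric.exists_int_coords_of_latA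
    (h : LatticeIsometric (fun x y => B x y) (prodForm (stdDot (k + 1)) (stdDot (l + 1)))
      L ((latA k).prod (latA l))) :
    ∃ φ : L → Fin (k + 1) ⊕ Fin (l + 1) → ℤ,
      (∀ x y : L, B x y = (φ x ⬝ᵥ φ y : ℤ)) ∧ ∀ x, ∑ p, φ x p = 0 := by
  obtain ⟨φ, -, hφ, hrange⟩ := h.exists_coords
  have hA (x : L) : φ x ∘ Sum.inl ∈ latA k ∧ φ x ∘ Sum.inr ∈ latA l :=
    (hrange _).1 (LinearMap.mem_range_self φ x)
  have hint (x : L) : ∀ p, ∃ z : ℤ, φ x p = z :=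
    Sum.rec (hA x).1.1 (hA x).2.1
  choose ψ hψ using hint
  refine ⟨ψ, fun x y => ?_, fun x => ?_⟩
  · simp only [hφ, dotProduct, hψ]
    push_cast
    rfl
  · have hsum : ∑ p, φ x p = 0 := by
      rw [Fintype.sum_sum_type, ← add_zero (0 : ℚ)]
      exact congrArg₂ (· + ·) (hA x).1.2 (hA x).2.2
    simp only [hψ] at hsum
    exact_mod_cast hsum

lemma not_containsD4_of_latA
    (h : LatticeIsometric (fun x y => B x y) (prodForm (stdDot (k + 1)) (stdDot (l + 1)))
      (rootSublattice B E) ((latA k).prod (latA l))) : ¬ ContainsD4 B E := by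
  intro hD4
  obtain ⟨c, hc, r, hr, hcc, hrr, hcr, horth⟩ := hD4.of_roots_mem (L := rootSublattice B E)
    fun x hx hxx => Submodule.subset_span ⟨hx, hxx⟩
  obtain ⟨φ, hφ, hsum⟩ := h.exists_int_coords_of_latA
  have hdot {x y : V} (hx : x ∈ rootSublattice B E) (hy : y ∈ rootSublattice B E) {z : ℤ}
      (hxy : B x y = z) : φ ⟨x, hx⟩ ⬝ᵥ φ ⟨y, hy⟩ = z := by
    exact_mod_cast (hφ ⟨x, hx⟩ ⟨y, hy⟩).symm.trans hxy
  obtain ⟨i, hi⟩ := exists_dotProduct_eq_zero_of_pairwise_orthogonal (c := φ ⟨c, hc⟩)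
    (r := fun i => φ ⟨r i, hr i⟩) (hdot _ _ (mod_cast hcc)) (hsum _)
    (fun i => hdot _ _ (mod_cast hrr i)) (fun i => hsum _)
    (fun i j hij => hdot _ _ (mod_cast horth i j hij))
  have : φ ⟨c, hc⟩ ⬝ᵥ φ ⟨r i, hr i⟩ = -1 := hdot _ _ (mod_cast hcr i)
  omega

end RootsOfTypeA

section Orthonormal

variable {B : V →ₗ[ℚ] V →ₗ[ℚ] ℚ} {N : Submodule ℤ V}

lemma containsD4_of_orthonormal {e : Fin 4 → V}
    (he : ∀ i j, B (e i) (e j) = if i = j then 1 else 0)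
    (hsub : ∀ i j, e i - e j ∈ N) (hadd : ∀ i j, e i + e j ∈ N) : ContainsD4 B N := by
  refine ⟨e 1 - e 2, hsub 1 2, ![e 0 - e 1, e 2 - e 3, e 2 + e 3], ?_, ?_, ?_, ?_, ?_⟩
  · simp [Fin.forall_fin_succ, hsub, hadd]
  · simp [he, one_add_one_eq_two]
  · simp [Fin.forall_fin_succ, he, one_add_one_eq_two]
  · simp [Fin.forall_fin_succ, he]
  · simp [Fin.forall_fin_succ, he]

variable {ι : Type*} [Fintype ι] [DecidableEq ι] {e : ι → V}

lemma sum_sq_coord_le (hB : IsPosDefSymm B)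
    (he : ∀ i j, B (e i) (e j) = if i = j then 1 else 0) (x : V) :
    ∑ i, B x (e i) ^ 2 ≤ B x x := by
  set w := x - ∑ i, B x (e i) • e i with hw
  have hwe (i : ι) : B w (e i) = 0 := by simp [hw, he]
  have hww : B w w = B x x - ∑ i, B x (e i) ^ 2 := calc
    B w w = B w (x - ∑ i, B x (e i) • e i) := rfl
    _ = B w x := by simp [hwe]
    _ = B x x - ∑ i, B x (e i) ^ 2 := by simp [hw, hB.1 (e _) x, sq]
  have hnonneg : 0 ≤ B w w := by
    rcases eq_or_ne w 0 with h0 | h0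
    · simp [h0]
    · exact (hB.2 w h0).le
  linarith

lemma card_div_four_le_of_half_int_coords (hB : IsPosDefSymm B)
    (he : ∀ i j, B (e i) (e j) = if i = j then 1 else 0) {x : V}
    (hx : ∀ i, ∃ k : ℤ, B x (e i) = k + 1 / 2) : (Fintype.card ι : ℚ) / 4 ≤ B x x := by
  have hquarter (i : ι) : 1 / 4 ≤ B x (e i) ^ 2 := by
    obtain ⟨k, hk⟩ := hx i
    have : (0 : ℚ) ≤ k * (k + 1) := by
      exact_mod_cast (by rcases le_or_gt 0 k with h | h <;> nlinarith : 0 ≤ k * (k + 1))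
    rw [hk]
    linarith
  calc (Fintype.card ι : ℚ) / 4 = ∑ _i : ι, (1 / 4 : ℚ) := by simp [div_eq_mul_inv]
    _ ≤ ∑ i, B x (e i) ^ 2 := Finset.sum_le_sum fun i _ => hquarter i
    _ ≤ B x x := sum_sq_coord_le hB he x

end Orthonormal

section DFrame

variable {B : V →ₗ[ℚ] V →ₗ[ℚ] ℚ} {N E : Submodule ℤ V} {ι β : Type*} [DecidableEq ι]
  {block : ι → β} {e : ι → V}

/-- An orthonormal family `e`, cut into blocks, such that `E` contains the lattice `D` spanned by
the vectors `e i ± e j` with `i`, `j` in a common block, and such that the roots of `E` have integer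
coordinates with respect to `e`. The differences `e i - e j` are not listed, since they are
`(e i + e j) - (e j + e j)`. -/
structure IsDFrame (B : V →ₗ[ℚ] V →ₗ[ℚ] ℚ) (E : Submodule ℤ V) (block : ι → β) (e : ι → V) :
    Prop where
  orthonormal : ∀ i j, B (e i) (e j) = if i = j then 1 else 0
  add_mem : ∀ i j, block i = block j → e i + e j ∈ E
  root_coord : ∀ x ∈ E, B x x = 2 → ∀ i, ∃ z : ℤ, B x (e i) = z

namespace IsDFrame

lemma sub_mem (he : IsDFrame B E block e) {i j : ι} (hij : block i = block j) : e i - e j ∈ E := by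
  simpa only [add_sub_add_right_eq_sub] using E.sub_mem (he.add_mem i j hij) (he.add_mem j j rfl)

lemma add_self_notMem (he : IsDFrame B E block e) (hNE : IndexTwo (N ⊓ E) E)
    (hD4 : ¬ ContainsD4 B N) {i : ι} (g : Fin 7 ↪ ι) (hg : ∀ a, block (g a) = block i) :
    e i + e i ∉ N := by
  intro hi
  have hdouble (a : Fin 7) : e (g a) + e (g a) ∈ N := by
    have := N.add_mem (hNE.add_self_mem (he.sub_mem (hg a))).1 hi
    rwa [add_add_add_comm, sub_add_cancel] at this
  obtain ⟨f, hf⟩ := hNE.exists_embedding_sub_mem (k := 3) (fun a => e (g a))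
    (fun a b => he.sub_mem ((hg a).trans (hg b).symm)) (by simp)
  refine hD4 (containsD4_of_orthonormal (e := fun a => e (g (f a))) ?_ (fun a b => (hf a b).1) ?_)
  · simp [he.orthonormal]
  · intro a b
    simpa only [sub_add_add_cancel] using N.add_mem (hf a b).1 (hdouble (f b))

lemma sub_mem_or_add_mem (he : IsDFrame B E block e) (hNE : IndexTwo (N ⊓ E) E) {i j : ι}
    (hij : block i = block j) (hi : e i + e i ∉ N) : e i - e j ∈ N ∨ e i + e j ∈ N := by
  by_contra! h
  refine hi ?_
  simpa using (hNE.add_mem_of_notMem (he.sub_mem hij) (he.add_mem i j hij)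
    (fun h' => h.1 h'.1) (fun h' => h.2 h'.1)).1

lemma coord_int_of_block_eq (he : IsDFrame B E block e) (hN : N ≤ dualLattice B N)
    (hNE : IndexTwo (N ⊓ E) E) {i j : ι} (hij : block i = block j) (hi : e i + e i ∉ N) {x : V}
    (hx : x ∈ N) (hxi : ∃ z : ℤ, B x (e i) = z) : ∃ z : ℤ, B x (e j) = z := by
  obtain ⟨a, ha⟩ := hxi
  rcases he.sub_mem_or_add_mem hNE hij hi with h | h <;> obtain ⟨b, hb⟩ := hN hx _ h
  · refine ⟨a - b, ?_⟩
    rw [map_sub] at hb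
    push_cast
    linarith
  · refine ⟨b - a, ?_⟩
    rw [map_add] at hb
    push_cast
    linarith

lemma exists_four_mul_coord_odd (he : IsDFrame B E block e) (hN : N ≤ dualLattice B N)
    (hE : IsUnimodular B E) (hNE : IndexTwo (N ⊓ E) E) {i : ι} (hi : e i + e i ∉ N) {x : V}
    (hx : x ∈ N) (hxE : x ∉ E) : ∃ k : ℤ, 4 * B x (e i) = 2 * k + 1 := by
  obtain ⟨k, hk⟩ := exists_two_mul_eq_odd hN hE hNE (he.add_mem i i rfl) hi hx hxE
  refine ⟨k, ?_⟩
  rw [map_add] at hk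
  linarith

lemma exists_ne_sub_coord_int [Fintype β] (he : IsDFrame B E block e)
    (hN : N ≤ dualLattice B N) (hE : IsUnimodular B E) (hNE : IndexTwo (N ⊓ E) E)
    (hblock : Function.Surjective block) (hdouble : ∀ i, e i + e i ∉ N) {κ : Type*} [Fintype κ]
    {x : κ → V} (hx : ∀ a, x a ∈ N) (hxE : ∀ a, x a ∉ E)
    (hcard : 2 ^ Fintype.card β < Fintype.card κ) :
    ∃ a b, a ≠ b ∧ ∀ i, ∃ z : ℤ, B (x a - x b) (e i) = z := by
  classical
  choose rep hrep using hblock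
  choose k hk using fun a t =>
    he.exists_four_mul_coord_odd hN hE hNE (hdouble (rep t)) (hx a) (hxE a)
  obtain ⟨a, b, hab, hsame⟩ := Fintype.exists_ne_map_eq_of_card_lt
    (fun a t => decide (Even (k a t))) (by simpa using hcard)
  refine ⟨a, b, hab, fun i => ?_⟩
  refine he.coord_int_of_block_eq hN hNE (hrep (block i)) (hdouble _) (N.sub_mem (hx a) (hx b)) ?_
  have hparity : Even (k a (block i) - k b (block i)) := by
    rw [Int.even_sub]
    simpa only [decide_eq_decide] using congrFun hsame (block i)
  obtain ⟨z, hz⟩ := hparity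
  refine ⟨z, ?_⟩
  have hz' : (k a (block i) - k b (block i) : ℚ) = z + z := by exact_mod_cast hz
  rw [map_sub, LinearMap.sub_apply]
  linarith [hk a (block i), hk b (block i)]

end IsDFrame

lemma single_add_single_mem_latD {n : ℕ} (i j : Fin n) :
    (Pi.single i 1 + Pi.single j 1 : Fin n → ℚ) ∈ latD n := by
  refine ⟨fun t => ⟨(Pi.single i 1 + Pi.single j 1 : Fin n → ℤ) t, ?_⟩, 1, ?_⟩
  · simp [Pi.single_apply]
  · norm_num [Finset.sum_add_distrib]

lemma rootSublattice_le : rootSublattice B E ≤ E :=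
  Submodule.span_le.2 fun _ hx => hx.1

lemma exists_isDFrame_of_latD {n m : ℕ}
    (h : LatticeIsometric (fun x y => B x y) (prodForm (stdDot n) (stdDot m))
      (rootSublattice B E) ((latD n).prod (latD m))) :
    ∃ e : Fin n ⊕ Fin m → V, IsDFrame B E Sum.isLeft e := by
  obtain ⟨φ, hinj, hφ, hrange⟩ := h.exists_coords
  have hroot (p q : Fin n ⊕ Fin m) (hpq : p.isLeft = q.isLeft) :
      ∃ x, φ x = Pi.single p 1 + Pi.single q 1 := by
    refine (hrange _).2 ?_
    rcases p with i | i <;> rcases q with j | j <;> simp only [Sum.isLeft, reduceCtorEq] at hpq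
    · simpa [Pi.add_comp, Pi.single] using single_add_single_mem_latD i j
    · simpa [Pi.add_comp, Pi.single] using single_add_single_mem_latD i j
  choose d hd using fun p => hroot p p rfl
  have hBd (x : rootSublattice B E) (p : Fin n ⊕ Fin m) :
      B x ((1 / 2 : ℚ) • (d p : V)) = φ x p := by
    rw [map_smul, hφ, hd]
    simp only [dotProduct_add, dotProduct_single_one, smul_eq_mul]
    ring
  refine ⟨fun p => (1 / 2 : ℚ) • (d p : V), fun p q => ?_, fun p q hpq => ?_, fun x hx hxx p => ?_⟩
  · simp only [map_smul B, LinearMap.smul_apply, hBd, hd, Pi.add_apply, Pi.single_apply,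
      eq_comm (a := q), smul_eq_mul]
    split_ifs <;> norm_num
  · obtain ⟨x, hx⟩ := hroot p q hpq
    have hsum : d p + d q = x + x := hinj (by
      rw [map_add, map_add, hx, hd, hd, add_add_add_comm])
    have hsumV : (d p + d q : V) = x + x := congrArg Subtype.val hsum
    rw [← smul_add, hsumV, ← two_smul ℚ, smul_smul, one_div_mul_cancel two_ne_zero, one_smul]
    exact rootSublattice_le x.2
  · have hxR : x ∈ rootSublattice B E := Submodule.subset_span ⟨hx, hxx⟩
    have hD := (hrange _).1 (LinearMap.mem_range_self φ ⟨x, hxR⟩)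
    obtain ⟨z, hz⟩ : ∃ z : ℤ, φ ⟨x, hxR⟩ p = z := Sum.rec hD.1.1 hD.2.1 p
    exact ⟨z, (hBd ⟨x, hxR⟩ p).trans hz⟩

end DFrame

section LPlus

variable {B : V →ₗ[ℚ] V →ₗ[ℚ] ℚ} {N E E₁ E₂ : Submodule ℤ V}

lemma ContainsLPlus.isOddLat (h : ContainsLPlus B N) : IsOddLat B N := by
  obtain ⟨-, -, a, ha, -, -, hnorm, -⟩ := h
  exact ⟨a 0, ha 0, 1, by rw [hnorm]; norm_num⟩

lemma mem_of_norm_two (hB : IsPosDefSymm B) (hN : N ≤ dualLattice B N) (hodd : IsOddLat B N)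
    (hE : IsEvenNeighbor B N E) {x : V} (hx : x ∈ N) (hxx : B x x = 2) : x ∈ E :=
  mem_of_even_norm hB.1 hN hodd hE.2.2.1 hE.2.2.2.1 hx (n := 1) (by rw [hxx]; norm_num)

lemma IsDFrame.not_containsLPlus {ι β : Type*} [Fintype ι] [DecidableEq ι] [Fintype β]
    {block : ι → β} {e : ι → V} (he : IsDFrame B E block e) (hB : IsPosDefSymm B)
    (hN : N ≤ dualLattice B N) (hE : IsEvenNeighbor B N E)
    (hblock : Function.Surjective block) (hdouble : ∀ i, e i + e i ∉ N)
    (hβ : Fintype.card β ≤ 2) (hι : 16 < Fintype.card ι) : ¬ ContainsLPlus B N := by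
  intro hL
  have hodd : IsOddLat B N := hL.isOddLat
  obtain ⟨h, hhN, a, haN, hh, hha, haa, horth⟩ := hL
  have hhE : h ∈ E := mem_of_norm_two hB hN hodd hE hhN hh
  obtain ⟨-, hEuni, hEeven, -, hNE⟩ := hE
  have haE (i : Fin 5) : a i ∉ E := hEeven.notMem_of_odd (k := 1) (by rw [haa]; norm_num)
  obtain ⟨i, j, hij, hsub⟩ := he.exists_ne_sub_coord_int hN hEuni hNE hblock hdouble
    haN haE ((Nat.pow_le_pow_right two_pos hβ).trans_lt (by simp))
  have hhalf (p : ι) : ∃ k : ℤ, B (a i + a j - h) (e p) = k + 1 / 2 := by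
    obtain ⟨k, hk⟩ := he.exists_four_mul_coord_odd hN hEuni hNE (hdouble p) (haN i) (haE i)
    obtain ⟨d, hd⟩ := hsub p
    obtain ⟨c, hc⟩ := he.root_coord h hhE hh p
    refine ⟨k - d - c, ?_⟩
    simp only [map_sub, map_add, LinearMap.sub_apply, LinearMap.add_apply] at hd ⊢
    push_cast
    linarith
  have hnorm : B (a i + a j - h) (a i + a j - h) = 4 := by
    simp only [map_sub, map_add, LinearMap.sub_apply, LinearMap.add_apply, hB.1 (a _) h, haa, hha,
      hh, horth i j hij, horth j i hij.symm]
    norm_num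
  have hbound := card_div_four_le_of_half_int_coords hB he.orthonormal hhalf
  have hcard : (16 : ℚ) < Fintype.card ι := by exact_mod_cast hι
  linarith

theorem stmt3_general (hB : IsPosDefSymm B) (hN : IsIntegralLattice B N)
    (hE₁ : IsEvenNeighbor B N E₁) (hE₂ : IsEvenNeighbor B N E₂)
    {n m k l : ℕ} (hn : 7 ≤ n) (hm : 7 ≤ m) (hnm : 16 < n + m)
    (hr₁ : LatticeIsometric (fun x y => B x y) (prodForm (stdDot n) (stdDot m))
      (rootSublattice B E₁) ((latD n).prod (latD m)))
    (hr₂ : LatticeIsometric (fun x y => B x y) (prodForm (stdDot (k + 1)) (stdDot (l + 1)))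
      (rootSublattice B E₂) ((latA k).prod (latA l))) :
    ¬ ContainsLPlus B N := by
  intro hL
  have hD4 : ¬ ContainsD4 B N := fun h => not_containsD4_of_latA hr₂
    (h.of_roots_mem fun x hx hxx => mem_of_norm_two hB hN.integral hL.isOddLat hE₂ hx hxx)
  obtain ⟨e, he⟩ := exists_isDFrame_of_latD hr₁
  have hseven : ∀ t : Bool, ∃ g : Fin 7 ↪ Fin n ⊕ Fin m, ∀ a, (g a).isLeft = t
    | true => ⟨(Fin.castLEEmb hn).trans .inl, fun _ => rfl⟩
    | false => ⟨(Fin.castLEEmb hm).trans .inr, fun _ => rfl⟩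
  have hblock : Function.Surjective (Sum.isLeft : Fin n ⊕ Fin m → Bool) := fun t =>
    let ⟨g, hg⟩ := hseven t
    ⟨g 0, hg 0⟩
  have hdouble (p : Fin n ⊕ Fin m) : e p + e p ∉ N :=
    let ⟨g, hg⟩ := hseven p.isLeft
    he.add_self_notMem hE₁.2.2.2.2 hD4 g hg
  exact he.not_containsLPlus hB hN.integral hE₁ hblock hdouble (by simp) (by simpa using hnm) hL

end LPlus

/-- An odd Niemeier lattice of minimum norm 2 whose two even neighbors have root
sublattices isometric to `D₁₂⊕D₁₂` and `A₁₂⊕A₁₂` respectively does not contain `L⁺`. -/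
theorem stmt3 {V : Type*} [AddCommGroup V] [Module ℚ V]
    (B : V →ₗ[ℚ] V →ₗ[ℚ] ℚ) (hB : IsPosDefSymm B)
    (N : Submodule ℤ V) (hN : IsOddNiemeier B N)
    (hmin : HasMinNorm B N 2)
    (E₁ E₂ : Submodule ℤ V) (hne : E₁ ≠ E₂)
    (hE₁ : IsEvenNeighbor B N E₁) (hE₂ : IsEvenNeighbor B N E₂)
    (hr₁ : LatticeIsometric (fun x y => B x y) (prodForm (stdDot 12) (stdDot 12))
      (rootSublattice B E₁) ((latD 12).prod (latD 12)))
    (hr₂ : LatticeIsometric (fun x y => B x y) (prodForm (stdDot 13) (stdDot 13))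
      (rootSublattice B E₂) ((latA 12).prod (latA 12))) :
    ¬ ContainsLPlus B N := by
  exact stmt3_general hB hN.1 hE₁ hE₂ (by norm_num) (by norm_num) (by norm_num) hr₁ hr₂

end Niemeier
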